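/- The function K defined by K(r) = (2/(1+r))·log(1 + (2/r)(1 + √(1+r))) is strictly decreasing on (0, +∞). -/

import Mathlib

/-- The threshold function `K(r) = (2/(1+r))·log(1 + (2/r)(1 + √(1+r)))`. -/
noncomputable def Kfun (r : ℝ) : ℝ :=
  (2 / (1 + r)) * Real.log (1 + (2 / r) * (1 + Real.sqrt (1 + r)))

/-!
With `t = 1 / √(1 + r)`, the argument of the logarithm in `K` is `(1 + t) / (1 - t)`, so that
`K(r) = 4 t² artanh t`. This is strictly increasing in `t ∈ (0, 1)`, while `t` is strictly
decreasing in `r`.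
-/

open Set Real

theorem strictMonoOn_pow_mul_artanh (n : ℕ) :
    StrictMonoOn (fun t : ℝ ↦ t ^ n * artanh t) (Ico 0 1) := by
  intro x hx y hy hxy
  have hy_pos : 0 < y := hx.1.trans_lt hxy
  calc x ^ n * artanh x
      ≤ y ^ n * artanh x :=
        mul_le_mul_of_nonneg_right (pow_le_pow_left₀ hx.1 hxy.le n) (artanh_nonneg hx.1)
    _ < y ^ n * artanh y :=
        mul_lt_mul_of_pos_left (artanh_lt_artanh (neg_one_lt_zero.trans_le hx.1) hy.2 hxy)
          (pow_pos hy_pos n)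

theorem strictAntiOn_inv_sqrt_one_add :
    StrictAntiOn (fun r : ℝ ↦ (√(1 + r))⁻¹) (Ioi (-1)) := by
  intro a ha b _ hab
  have ha' : 0 < 1 + a := neg_lt_iff_pos_add'.mp ha
  exact inv_strictAnti₀ (sqrt_pos.mpr ha') (sqrt_lt_sqrt ha'.le (by gcongr))

theorem inv_sqrt_one_add_mem_Ioo {r : ℝ} (hr : 0 < r) : (√(1 + r))⁻¹ ∈ Ioo (0 : ℝ) 1 :=
  have one_lt_sqrt : 1 < √(1 + r) := lt_sqrt_of_sq_lt (by linarith)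
  ⟨inv_pos.mpr (zero_lt_one.trans one_lt_sqrt), inv_lt_one_of_one_lt₀ one_lt_sqrt⟩

theorem one_add_two_div_mul_one_add_sqrt {r : ℝ} (hr : -1 < r) (hr₀ : r ≠ 0) :
    1 + 2 / r * (1 + √(1 + r)) = (1 + (√(1 + r))⁻¹) / (1 - (√(1 + r))⁻¹) := by
  have sqrt_sq : √(1 + r) ^ 2 = 1 + r := sq_sqrt (by linarith)
  have sqrt_ne_zero : √(1 + r) ≠ 0 := (sqrt_pos.mpr (by linarith)).ne'
  have sqrt_sub_one_ne_zero : √(1 + r) - 1 ≠ 0 := by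
    intro h
    exact hr₀ (by linear_combination (√(1 + r) + 1) * h - sqrt_sq)
  field_simp
  linear_combination 2 * sqrt_sq

theorem Kfun_eq_four_mul_sq_mul_artanh {r : ℝ} (hr : 0 < r) :
    Kfun r = 4 * ((√(1 + r))⁻¹ ^ 2 * artanh (√(1 + r))⁻¹) := by
  have ht := inv_sqrt_one_add_mem_Ioo hr
  rw [Kfun, one_add_two_div_mul_one_add_sqrt (by linarith) hr.ne',
    artanh_eq_half_log ⟨by linarith [ht.1], ht.2.le⟩, inv_pow, sq_sqrt (by linarith)]
  ring

/-- `K` is strictly decreasing on `(0, +∞)`. -/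
theorem stmt9 : StrictAntiOn Kfun (Set.Ioi 0) := by
  have t_strictAnti : StrictAntiOn (fun r : ℝ ↦ (√(1 + r))⁻¹) (Ioi 0) :=
    strictAntiOn_inv_sqrt_one_add.mono (Ioi_subset_Ioi (by norm_num))
  have t_mapsTo : MapsTo (fun r : ℝ ↦ (√(1 + r))⁻¹) (Ioi 0) (Ico 0 1) :=
    fun _ hr ↦ Ioo_subset_Ico_self (inv_sqrt_one_add_mem_Ioo hr)
  have sq_mul_artanh_strictAnti :=
    (strictMonoOn_pow_mul_artanh 2).comp_strictAntiOn t_strictAnti t_mapsTo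
  intro a ha b hb hab
  rw [Kfun_eq_four_mul_sq_mul_artanh ha, Kfun_eq_four_mul_sq_mul_artanh hb]
  exact mul_lt_mul_of_pos_left (sq_mul_artanh_strictAnti ha hb hab) four_pos
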